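/- arXiv:1011.4253 — 2 statements merged into one kernel-verified Lean document; each statement's English description precedes it below -/
import Mathlib

section
/- Let p : 𝕊 → ℂ be holomorphic on the strip 𝕊 = {w : 0 < Re w < 1} with Re p(w) ≥ 0 for all w ∈ 𝕊. Then for any real a < b there exists a constant C₂(a,b,p) > 0 such that ∫ₐᵇ |Im p(u + iv)| dv ≤ −C₂(a,b,p)·log(u(1−u)) for all u ∈ (0,1). -/
open Complex Set

/-- Harnack-type estimate: a holomorphic function with nonnegative real part on a disc varies by at
most twice the real part of its central value on the concentric disc of half the radius. -/
theorem norm_sub_le_two_mul_re_of_re_nonneg {f : ℂ → ℂ} {c z : ℂ} {r : ℝ}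
    (hf : DifferentiableOn ℂ f (Metric.ball c r)) (hre : ∀ w ∈ Metric.ball c r, 0 ≤ (f w).re)
    (hr : 0 < r) (hz : dist z c ≤ r / 2) : ‖f z - f c‖ ≤ 2 * (f c).re := by
  have hc : c ∈ Metric.ball c r := Metric.mem_ball_self hr
  have hzb : z ∈ Metric.ball c r := by rw [Metric.mem_ball]; linarith
  refine le_of_forall_pos_le_add fun ε hε => ?_
  set δ : ℝ := ε / 2 with hδ
  have hδ0 : 0 < δ := by positivity
  set d : ℂ → ℂ := fun w => f w + δ + (starRingEnd ℂ) (f c + δ) with hd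
  have hdre : ∀ w ∈ Metric.ball c r, 0 < (d w).re := by
    intro w hw
    have h1 := hre w hw
    have h2 := hre c hc
    simp [hd]
    linarith
  have hd0 : ∀ w ∈ Metric.ball c r, d w ≠ 0 := by
    intro w hw h
    have := hdre w hw
    rw [h] at this
    simp at this
  set q : ℂ → ℂ := fun w => (f w - f c) / d w with hq
  have hqd : DifferentiableOn ℂ q (Metric.ball c r) := by
    refine (hf.sub_const _).div ?_ hd0
    exact (hf.add_const _).add_const _
  have hq1 : ∀ w ∈ Metric.ball c r, ‖q w‖ ≤ 1 := by
    intro w hw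
    rw [hq, norm_div, div_le_one (norm_pos_iff.2 (hd0 w hw)), Complex.norm_def, Complex.norm_def]
    apply Real.sqrt_le_sqrt
    have h1 := hre w hw
    have h2 := hre c hc
    simp [hd, Complex.normSq_apply]
    nlinarith [mul_nonneg h1 h2, mul_nonneg h1 hδ0.le, mul_nonneg h2 hδ0.le]
  have hqz : ‖q z‖ ≤ 1 / 2 := by
    have hmaps : MapsTo q (Metric.ball c r) (Metric.closedBall (q c) 1) := by
      intro w hw
      have : q c = 0 := by simp [hq]
      rw [this, mem_closedBall_zero_iff]
      exact hq1 w hw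
    have := Complex.dist_le_div_mul_dist_of_mapsTo_ball hqd hmaps hzb
    have h0 : q c = 0 := by simp [hq]
    rw [h0, dist_zero_right] at this
    calc ‖q z‖ ≤ 1 / r * dist z c := this
      _ ≤ 1 / r * (r / 2) := by gcongr
      _ = 1 / 2 := by field_simp
  have hmul : ‖f z - f c‖ = ‖q z‖ * ‖d z‖ := by
    rw [← norm_mul, hq, div_mul_cancel₀ _ (hd0 z hzb)]
  have hdz : ‖d z‖ ≤ ‖f z - f c‖ + 2 * ((f c).re + δ) := by
    have : d z = (f z - f c) + ((2 * ((f c).re + δ) : ℝ) : ℂ) := by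
      apply Complex.ext <;> simp [hd] <;> ring
    rw [this]
    refine (norm_add_le _ _).trans ?_
    rw [Complex.norm_real, Real.norm_of_nonneg (by have := hre c hc; positivity)]
  have := mul_le_mul hqz hdz (norm_nonneg _) (by norm_num)
  linarith

theorem norm_sin_le_exp_abs_im (z : ℂ) : ‖Complex.sin z‖ ≤ Real.exp |z.im| := by
  rw [Complex.sin, norm_div, norm_mul, Complex.norm_I, mul_one]
  have h1 : ‖Complex.exp (-z * I)‖ ≤ Real.exp |z.im| := by
    rw [Complex.norm_exp]; simp [le_abs_self]
  have h2 : ‖Complex.exp (z * I)‖ ≤ Real.exp |z.im| := by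
    rw [Complex.norm_exp]; simp [neg_le_abs]
  have := norm_sub_le (Complex.exp (-z * I)) (Complex.exp (z * I))
  rw [Complex.norm_ofNat]
  linarith

theorem continuous_vertical_line {p : ℂ → ℂ}
    (hp : DifferentiableOn ℂ p {w : ℂ | 0 < w.re ∧ w.re < 1}) {u : ℝ} (h0 : 0 < u) (h1 : u < 1) :
    Continuous fun v : ℝ => p ((u : ℂ) + (v : ℂ) * I) :=
  hp.continuousOn.comp_continuous (by fun_prop) (by intro v; simp [h0, h1])

/-- Integrals of the real part over vertical segments of fixed height stay bounded as the segment
approaches the left edge of the strip. -/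
theorem exists_integral_re_le {p : ℂ → ℂ}
    (hp : DifferentiableOn ℂ p {w : ℂ | 0 < w.re ∧ w.re < 1})
    (hRe : ∀ w ∈ {w : ℂ | 0 < w.re ∧ w.re < 1}, 0 ≤ (p w).re) {a b : ℝ} (hab : a < b) :
    ∃ M : ℝ, 0 ≤ M ∧ ∀ s : ℝ, 0 < s → s ≤ 1 / 2 →
      ∫ v in a..b, (p ((s : ℂ) + (v : ℂ) * I)).re ≤ M := by
  set k : ℝ := Real.pi / (b - a + 2) with hk
  have hL : 0 < b - a + 2 := by linarith
  have hk0 : 0 < k := div_pos Real.pi_pos hL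
  have hkL : k * (b - a + 2) = Real.pi := by rw [hk]; field_simp
  clear_value k
  have hsin0 : ∀ v ∈ Icc (a - 1) (b + 1), 0 ≤ Real.sin (k * (v - (a - 1))) := by
    intro v hv
    apply Real.sin_nonneg_of_nonneg_of_le_pi
    · exact mul_nonneg hk0.le (by linarith [hv.1])
    · rw [← hkL]
      exact mul_le_mul_of_nonneg_left (by linarith [hv.2]) hk0.le
  obtain ⟨v₀, hv₀, hmin⟩ := (isCompact_Icc (a := a) (b := b)).exists_isMinOn
    (nonempty_Icc.2 hab.le)
    (f := fun v => Real.sin (k * (v - (a - 1)))) (by fun_prop)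
  set m := Real.sin (k * (v₀ - (a - 1)))
  have hm0 : 0 < m := by
    apply Real.sin_pos_of_pos_of_lt_pi
    · exact mul_pos hk0 (by linarith [hv₀.1])
    · rw [← hkL]
      exact mul_lt_mul_of_pos_left (by linarith [hv₀.2]) hk0
  obtain ⟨B, hB⟩ := (isCompact_Icc (a := a - 1) (b := b + 1)).exists_bound_of_continuousOn
    (continuous_vertical_line hp (u := 1 / 2) (by norm_num) (by norm_num)).continuousOn
  have hB0 : 0 ≤ B := (norm_nonneg _).trans (hB a ⟨by linarith, by linarith⟩)
  refine ⟨B * Real.exp k * (b - a + 2) / m, by positivity, fun s hs hs2 => ?_⟩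
  have hcs := continuous_vertical_line hp hs (by linarith)
  have hcre : Continuous fun v : ℝ => (p ((s : ℂ) + (v : ℂ) * I)).re :=
    Complex.continuous_re.comp hcs
  have hre0 : ∀ v : ℝ, 0 ≤ (p ((s : ℂ) + (v : ℂ) * I)).re := by
    intro v; apply hRe; constructor <;> simp <;> linarith
  set g : ℂ → ℂ := fun w => Complex.sin (-I * k * (w - (s + (a - 1 : ℝ) * I))) with hg
  have hgd : Differentiable ℂ g := by rw [hg]; fun_prop
  have hgl : ∀ v : ℝ, g (s + v * I) = (Real.sin (k * (v - (a - 1))) : ℝ) := by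
    intro v
    rw [Complex.ofReal_sin]
    refine congrArg Complex.sin ?_
    push_cast
    linear_combination (-k * (v - (a - 1)) : ℂ) * I_sq
  have hgb : ∀ x : ℝ, g (x + (a - 1 : ℝ) * I) = -((Real.sinh (k * (x - s)) : ℝ) * I) := by
    intro x
    rw [Complex.ofReal_sinh, ← Complex.sin_mul_I, ← Complex.sin_neg]
    refine congrArg Complex.sin ?_
    push_cast
    ring
  have hgt : ∀ x : ℝ, g (x + (b + 1 : ℝ) * I) = (Real.sinh (k * (x - s)) : ℝ) * I := by
    intro x
    rw [Complex.ofReal_sinh, ← Complex.sin_mul_I, ← Complex.sin_pi_sub]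
    refine congrArg Complex.sin ?_
    have : (k * (b - a + 2) : ℂ) = Real.pi := by exact_mod_cast hkL
    rw [← this]
    push_cast
    linear_combination (-k * (b - a + 2) : ℂ) * I_sq
  have hrect := Complex.integral_boundary_rect_eq_zero_of_differentiableOn (fun w => p w * g w)
    (s + (a - 1 : ℝ) * I) ((1 / 2 : ℝ) + (b + 1 : ℝ) * I) (by
      refine (hp.mono ?_).mul hgd.differentiableOn
      intro w hw
      have h := hw.1
      simp only [mem_preimage, add_re, ofReal_re, mul_re, I_re, mul_zero, ofReal_im, I_im, mul_one,
        sub_self, add_zero, uIcc_of_le hs2] at h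
      exact ⟨by linarith [h.1], by linarith [h.2]⟩)
  simp only [add_re, ofReal_re, mul_re, I_re, mul_zero, ofReal_im, I_im, mul_one, sub_self,
    add_zero, add_im, mul_im, zero_add, smul_eq_mul, hgl, hgb, hgt] at hrect
  have hhor : ∀ y : ℝ, 0 ≤
      (∫ x in s..(1 / 2), p (x + y * I) * ((Real.sinh (k * (x - s)) : ℝ) * I)).im := by
    intro y
    have hcont : ContinuousOn (fun x : ℝ => p (x + y * I) * ((Real.sinh (k * (x - s)) : ℝ) * I))
        (uIcc s (1 / 2)) := by
      refine ContinuousOn.mul (hp.continuousOn.comp (by fun_prop) ?_) (by fun_prop)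
      intro x hx
      rw [uIcc_of_le hs2] at hx
      constructor <;> simp <;> linarith [hx.1, hx.2]
    have := Complex.imCLM.intervalIntegral_comp_comm
      (hcont.intervalIntegrable (μ := MeasureTheory.volume))
    rw [← Complex.imCLM_apply, ← this]
    apply intervalIntegral.integral_nonneg hs2
    intro x hx
    have h1 : 0 ≤ (p (x + y * I)).re := by
      apply hRe; constructor <;> simp <;> linarith [hx.1, hx.2]
    have h2 : 0 ≤ Real.sinh (k * (x - s)) :=
      Real.sinh_nonneg_iff.2 (mul_nonneg hk0.le (by linarith [hx.1]))
    rw [Complex.imCLM_apply, ← mul_assoc, Complex.mul_I_im, Complex.re_mul_ofReal]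
    exact mul_nonneg h1 h2
  have hleft : (∫ v in (a - 1)..(b + 1),
      p (s + v * I) * ((Real.sin (k * (v - (a - 1))) : ℝ) : ℂ)).re =
      ∫ v in (a - 1)..(b + 1), (p (s + v * I)).re * Real.sin (k * (v - (a - 1))) := by
    have hcont : Continuous fun v : ℝ =>
        p (s + v * I) * ((Real.sin (k * (v - (a - 1))) : ℝ) : ℂ) := hcs.mul (by fun_prop)
    have := Complex.reCLM.intervalIntegral_comp_comm
      (hcont.intervalIntegrable (μ := MeasureTheory.volume) (a - 1) (b + 1))
    rw [← Complex.reCLM_apply, ← this]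
    simp only [Complex.reCLM_apply, Complex.re_mul_ofReal]
  have hright : (∫ v in (a - 1)..(b + 1),
      p ((1 / 2 : ℝ) + v * I) * g ((1 / 2 : ℝ) + v * I)).re ≤ B * Real.exp k * (b - a + 2) := by
    refine (Complex.re_le_norm _).trans ?_
    have := intervalIntegral.norm_integral_le_of_norm_le_const (a := a - 1) (b := b + 1)
      (f := fun v : ℝ => p ((1 / 2 : ℝ) + v * I) * g ((1 / 2 : ℝ) + v * I))
      (C := B * Real.exp k) (by
        intro v hv
        rw [uIoc_of_le (by linarith)] at hv
        rw [norm_mul]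
        refine mul_le_mul (hB v ⟨hv.1.le, hv.2⟩) ?_ (norm_nonneg _) hB0
        refine (norm_sin_le_exp_abs_im _).trans (Real.exp_le_exp.2 ?_)
        simp
        rw [abs_of_pos hk0, abs_of_nonneg (by linarith)]
        nlinarith)
    rwa [abs_of_pos (by linarith), show b + 1 - (a - 1) = b - a + 2 by ring] at this
  have hF : ∫ v in (a - 1)..(b + 1), (p (s + v * I)).re * Real.sin (k * (v - (a - 1))) ≤
      B * Real.exp k * (b - a + 2) := by
    have him := congrArg Complex.im hrect
    simp only [mul_neg, intervalIntegral.integral_neg, add_im, sub_im, neg_im, Complex.I_mul_im,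
      zero_im, hleft] at him
    linarith [hhor (a - 1), hhor (b + 1)]
  rw [le_div_iff₀ hm0, ← intervalIntegral.integral_mul_const]
  have hcF : Continuous fun v : ℝ => (p (s + v * I)).re * Real.sin (k * (v - (a - 1))) :=
    hcre.mul (by fun_prop)
  calc ∫ v in a..b, (p (s + v * I)).re * m
      ≤ ∫ v in a..b, (p (s + v * I)).re * Real.sin (k * (v - (a - 1))) := by
        apply intervalIntegral.integral_mono_on hab.le
          ((hcre.mul continuous_const).intervalIntegrable _ _) (hcF.intervalIntegrable _ _)
        intro v hv
        exact mul_le_mul_of_nonneg_left (hmin hv) (hre0 v)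
    _ ≤ ∫ v in (a - 1)..(b + 1), (p (s + v * I)).re * Real.sin (k * (v - (a - 1))) := by
        apply intervalIntegral.integral_mono_interval (by linarith) hab.le (by linarith) _
          (hcF.intervalIntegrable _ _)
        filter_upwards [MeasureTheory.ae_restrict_mem measurableSet_Ioc] with v hv
        exact mul_nonneg (hre0 v) (hsin0 v ⟨hv.1.le, hv.2⟩)
    _ ≤ _ := hF

/-- Dyadic growth bound for the integrals of `|Im p|` over vertical segments. -/
theorem exists_integral_abs_im_le {p : ℂ → ℂ}
    (hp : DifferentiableOn ℂ p {w : ℂ | 0 < w.re ∧ w.re < 1})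
    (hRe : ∀ w ∈ {w : ℂ | 0 < w.re ∧ w.re < 1}, 0 ≤ (p w).re) {a b : ℝ} (hab : a < b) :
    ∃ A M : ℝ, 0 ≤ A ∧ 0 ≤ M ∧ ∀ n : ℕ, ∀ u : ℝ, (1 / 2) ^ (n + 1) ≤ u → u ≤ 1 / 2 →
      ∫ v in a..b, |(p ((u : ℂ) + (v : ℂ) * I)).im| ≤ A + M * n := by
  obtain ⟨M, hM0, hM⟩ := exists_integral_re_le hp hRe hab
  refine ⟨∫ v in a..b, |(p (((1 / 2 : ℝ) : ℂ) + (v : ℂ) * I)).im|, 2 * M,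
    intervalIntegral.integral_nonneg hab.le fun _ _ => abs_nonneg _, by positivity, fun n => ?_⟩
  induction n with
  | zero =>
    intro u h1 h2
    have : u = 1 / 2 := le_antisymm h2 (by simpa using h1)
    subst this
    simp
  | succ n ih =>
    intro u h1 h2
    have hu : 0 < u := lt_of_lt_of_le (by positivity) h1
    set s : ℝ := min (2 * u) (1 / 2)
    have hs2 : s ≤ 1 / 2 := min_le_right _ _
    have hsu : s ≤ 2 * u := min_le_left _ _
    have hus : u ≤ s := le_min (by linarith) h2
    have hs0 : 0 < s := hu.trans_le hus
    have hsn : (1 / 2) ^ (n + 1) ≤ s := by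
      refine le_min ?_ ?_
      · rw [pow_succ] at h1; linarith
      · simpa using pow_le_pow_of_le_one (a := (1 / 2 : ℝ)) (by norm_num) (by norm_num)
          (show 1 ≤ n + 1 by omega)
    have hpt : ∀ v : ℝ, |(p ((u : ℂ) + (v : ℂ) * I)).im| ≤
        |(p ((s : ℂ) + (v : ℂ) * I)).im| + 2 * (p ((s : ℂ) + (v : ℂ) * I)).re := by
      intro v
      have hsub : Metric.ball ((s : ℂ) + (v : ℂ) * I) s ⊆ {w : ℂ | 0 < w.re ∧ w.re < 1} := by
        intro w hw
        rw [Metric.mem_ball, dist_eq_norm] at hw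
        have := abs_lt.1 ((Complex.abs_re_le_norm _).trans_lt hw)
        simp at this
        constructor <;> linarith [this.1, this.2]
      have h := norm_sub_le_two_mul_re_of_re_nonneg (z := (u : ℂ) + (v : ℂ) * I)
        (hp.mono hsub) (fun w hw => hRe w (hsub hw)) hs0 (by
          rw [dist_eq_norm, add_sub_add_right_eq_sub, ← ofReal_sub, norm_real, Real.norm_eq_abs,
            abs_le]
          constructor <;> linarith)
      have h' := (Complex.abs_im_le_norm _).trans h
      rw [sub_im] at h'
      linarith [abs_sub_abs_le_abs_sub (p ((u : ℂ) + (v : ℂ) * I)).im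
        (p ((s : ℂ) + (v : ℂ) * I)).im]
    have hcu := continuous_vertical_line hp hu (by linarith)
    have hcs := continuous_vertical_line hp hs0 (by linarith)
    have hcs1 : Continuous fun v : ℝ => |(p ((s : ℂ) + (v : ℂ) * I)).im| :=
      (Complex.continuous_im.comp hcs).abs
    have hcs2 : Continuous fun v : ℝ => 2 * (p ((s : ℂ) + (v : ℂ) * I)).re :=
      continuous_const.mul (Complex.continuous_re.comp hcs)
    have hmono := intervalIntegral.integral_mono (μ := MeasureTheory.volume) hab.le
      ((Complex.continuous_im.comp hcu).abs.intervalIntegrable a b)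
      ((hcs1.add hcs2).intervalIntegrable a b) hpt
    simp only [Pi.add_apply, Function.comp_apply] at hmono
    rw [intervalIntegral.integral_add (hcs1.intervalIntegrable a b) (hcs2.intervalIntegrable a b),
      intervalIntegral.integral_const_mul] at hmono
    have h3 := ih s hsn hs2
    have h4 := hM s hs0 hs2
    rw [Nat.cast_succ]
    linarith

theorem exists_integral_abs_im_le_log {p : ℂ → ℂ}
    (hp : DifferentiableOn ℂ p {w : ℂ | 0 < w.re ∧ w.re < 1})
    (hRe : ∀ w ∈ {w : ℂ | 0 < w.re ∧ w.re < 1}, 0 ≤ (p w).re) {a b : ℝ} (hab : a < b) :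
    ∃ C : ℝ, 0 < C ∧ ∀ u : ℝ, 0 < u → u ≤ 1 / 2 →
      ∫ v in a..b, |(p ((u : ℂ) + (v : ℂ) * I)).im| ≤ -C * Real.log u := by
  obtain ⟨A, M, hA, hM, h⟩ := exists_integral_abs_im_le hp hRe hab
  have hl2 : 0 < Real.log 2 := Real.log_pos (by norm_num)
  refine ⟨(A + M + 1) / Real.log 2, by positivity, fun u hu hu2 => ?_⟩
  set t : ℝ := -Real.log u / Real.log 2 with ht
  have hlog : Real.log u ≤ -Real.log 2 := by
    have := Real.log_le_log hu hu2
    rwa [one_div, Real.log_inv] at this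
  have ht1 : 1 ≤ t := by rw [ht, le_div_iff₀ hl2]; linarith
  have hn1 : (⌊t⌋₊ : ℝ) ≤ t := Nat.floor_le (by linarith)
  have hn2 : t < ⌊t⌋₊ + 1 := Nat.lt_floor_add_one t
  have hpow : (1 / 2 : ℝ) ^ (⌊t⌋₊ + 1) ≤ u := by
    rw [← Real.log_le_log_iff (by positivity) hu, Real.log_pow, one_div, Real.log_inv]
    rw [ht, div_lt_iff₀ hl2, ← ht] at hn2
    push_cast
    linarith
  have h1 := h ⌊t⌋₊ u hpow hu2
  have h2 : -((A + M + 1) / Real.log 2) * Real.log u = (A + M + 1) * t := by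
    rw [ht]; ring
  rw [h2]
  nlinarith [mul_le_mul_of_nonneg_left hn1 hM, mul_le_mul_of_nonneg_left ht1 hA]

/-- Lemma (ii): for a holomorphic function `p` with nonnegative real part on the strip
`𝕊 = {w : 0 < Re w < 1}`, the integrals of `|Im p|` over vertical segments of fixed height
are bounded by `−C log(u(1−u))`. -/
theorem strip_im_integral_log_bounded
    (p : ℂ → ℂ)
    (hp : DifferentiableOn ℂ p {w : ℂ | 0 < w.re ∧ w.re < 1})
    (hRe : ∀ w ∈ {w : ℂ | 0 < w.re ∧ w.re < 1}, 0 ≤ (p w).re)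
    (a b : ℝ) (hab : a < b) :
    ∃ C : ℝ, 0 < C ∧ ∀ u ∈ Ioo (0:ℝ) 1,
      (∫ v in a..b, |(p ((u : ℂ) + (v : ℂ) * Complex.I)).im|) ≤
        -C * Real.log (u * (1 - u)) := by
  have hmaps : MapsTo (fun w : ℂ => 1 - w) {w : ℂ | 0 < w.re ∧ w.re < 1}
      {w : ℂ | 0 < w.re ∧ w.re < 1} := by
    rintro w ⟨h1, h2⟩
    constructor <;> simp <;> linarith
  obtain ⟨C₁, hC₁, h₁⟩ := exists_integral_abs_im_le_log hp hRe hab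
  obtain ⟨C₂, hC₂, h₂⟩ := exists_integral_abs_im_le_log (p := fun w => p (1 - w))
    (hp.comp (by fun_prop) hmaps) (fun w hw => hRe _ (hmaps hw)) (neg_lt_neg hab)
  refine ⟨C₁ + C₂, by positivity, fun u hu => ?_⟩
  have hu1 : 0 < 1 - u := by linarith [hu.2]
  rw [Real.log_mul hu.1.ne' hu1.ne']
  have hl1 := Real.log_neg hu.1 hu.2
  have hl2 := Real.log_neg hu1 (by linarith [hu.1])
  rcases le_total u (1 / 2) with h | h
  · have := h₁ u hu.1 h
    nlinarith [mul_pos_of_neg_of_neg hl1 (neg_lt_zero.2 hC₂),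
      mul_pos_of_neg_of_neg hl2 (neg_lt_zero.2 hC₁), mul_pos_of_neg_of_neg hl2 (neg_lt_zero.2 hC₂)]
  · have := h₂ (1 - u) hu1 (by linarith)
    have hsymm : ∫ v in (-b)..(-a), |(p (1 - (((1 - u : ℝ) : ℂ) + (v : ℂ) * I))).im| =
        ∫ v in a..b, |(p ((u : ℂ) + (v : ℂ) * I)).im| := by
      rw [← intervalIntegral.integral_comp_neg]
      congr! 5 with v
      push_cast
      ring
    rw [hsymm] at this
    nlinarith [mul_pos_of_neg_of_neg hl1 (neg_lt_zero.2 hC₂),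
      mul_pos_of_neg_of_neg hl2 (neg_lt_zero.2 hC₁), mul_pos_of_neg_of_neg hl1 (neg_lt_zero.2 hC₁)]
end

section
/- Let r ∈ (0,1) and ρ ∈ (r,1). Then the maximum over θ ∈ ℝ of Re K_r(e^{iθ}ρ) equals K_r(ρ) > 1, and the minimum over θ ∈ ℝ of Re K_r(e^{iθ}ρ) equals K_r(−ρ) ∈ (0,1). Moreover x ↦ K_r(x) is increasing on [r,1) with K_r(r) = 1. -/
open Complex Set

/-- The Villat kernel `K_r(z) = 1 + 2 ∑_{k≥1} (z^k − r^{2k} z^{−k})/(1 − r^{2k})`. -/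
noncomputable def villatK (r : ℝ) (z : ℂ) : ℂ :=
  1 + 2 * ∑' k : ℕ,
    ((z ^ (k + 1) - (r : ℂ) ^ (2 * (k + 1)) * z⁻¹ ^ (k + 1)) /
      (1 - (r : ℂ) ^ (2 * (k + 1))))

open scoped ComplexConjugate

/-- The general term of the series of `K_r(z) - (1 + z) / (1 - z)`. -/
noncomputable def villatRemainderTerm (r : ℝ) (k : ℕ) (z : ℂ) : ℂ :=
  (r : ℂ) ^ (2 * (k + 1)) * (z ^ (k + 1) - z⁻¹ ^ (k + 1)) / (1 - (r : ℂ) ^ (2 * (k + 1)))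

lemma pow_two_mul_succ_le_sq {r : ℝ} (hr : r ∈ Ioo (0 : ℝ) 1) (k : ℕ) :
    r ^ (2 * (k + 1)) ≤ r ^ 2 :=
  pow_le_pow_of_le_one hr.1.le hr.2.le (by omega)

lemma sq_lt_one_of_mem_Ioo {r : ℝ} (hr : r ∈ Ioo (0 : ℝ) 1) : r ^ 2 < 1 :=
  pow_lt_one₀ hr.1.le hr.2 two_ne_zero

lemma one_sub_pow_pos {r : ℝ} (hr : r ∈ Ioo (0 : ℝ) 1) (k : ℕ) :
    0 < 1 - r ^ (2 * (k + 1)) :=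
  sub_pos.2 (pow_lt_one₀ hr.1.le hr.2 (by omega))

lemma one_sub_ofReal_pow_ne_zero {r : ℝ} (hr : r ∈ Ioo (0 : ℝ) 1) (k : ℕ) :
    (1 - (r : ℂ) ^ (2 * (k + 1))) ≠ 0 := by
  exact_mod_cast (one_sub_pow_pos hr k).ne'

lemma norm_one_sub_ofReal_pow {r : ℝ} (hr : r ∈ Ioo (0 : ℝ) 1) (k : ℕ) :
    ‖1 - (r : ℂ) ^ (2 * (k + 1))‖ = 1 - r ^ (2 * (k + 1)) := by
  have h : (1 - (r : ℂ) ^ (2 * (k + 1))) = ((1 - r ^ (2 * (k + 1)) : ℝ) : ℂ) := by push_cast; rfl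
  rw [h, Complex.norm_real, Real.norm_of_nonneg (one_sub_pow_pos hr k).le]

lemma norm_villatRemainderTerm_le {r s : ℝ} (hr : r ∈ Ioo (0 : ℝ) 1) (hs : 0 < s) (k : ℕ) {z : ℂ}
    (hsz : s ≤ ‖z‖) (hz : ‖z‖ < 1) :
    ‖villatRemainderTerm r k z‖ ≤ 2 / (1 - r ^ 2) * (r ^ 2 / s) ^ (k + 1) := by
  have hs1 : s ≤ 1 := hsz.trans hz.le
  have hnum : ‖z ^ (k + 1) - z⁻¹ ^ (k + 1)‖ ≤ 2 * s⁻¹ ^ (k + 1) := by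
    have h1 : ‖z ^ (k + 1)‖ ≤ s⁻¹ ^ (k + 1) := by
      rw [norm_pow]
      exact pow_le_pow_left₀ (norm_nonneg _) (hz.le.trans (one_le_inv₀ hs |>.2 hs1)) _
    have h2 : ‖z⁻¹ ^ (k + 1)‖ ≤ s⁻¹ ^ (k + 1) := by
      rw [norm_pow, norm_inv]
      gcongr
    linarith [norm_sub_le (z ^ (k + 1)) (z⁻¹ ^ (k + 1))]
  have hden : 0 < 1 - r ^ 2 := sub_pos.2 (sq_lt_one_of_mem_Ioo hr)
  rw [villatRemainderTerm, norm_div, norm_mul, norm_one_sub_ofReal_pow hr, norm_pow,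
    Complex.norm_real, Real.norm_of_nonneg hr.1.le]
  calc r ^ (2 * (k + 1)) * ‖z ^ (k + 1) - z⁻¹ ^ (k + 1)‖ / (1 - r ^ (2 * (k + 1)))
      ≤ r ^ (2 * (k + 1)) * (2 * s⁻¹ ^ (k + 1)) / (1 - r ^ 2) := by
        have := hr.1
        gcongr r ^ (2 * (k + 1)) * ?_ / (1 - ?_)
        exact pow_two_mul_succ_le_sq hr k
    _ = 2 / (1 - r ^ 2) * (r ^ 2 / s) ^ (k + 1) := by
        rw [div_pow, inv_pow, pow_mul]
        ring

lemma summable_villatRemainderTerm_bound {r s : ℝ} (hs : r ^ 2 < s) :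
    Summable fun k : ℕ => 2 / (1 - r ^ 2) * (r ^ 2 / s) ^ (k + 1) := by
  have hs0 : 0 < s := (sq_nonneg r).trans_lt hs
  refine Summable.mul_left _ ((summable_nat_add_iff 1).2 ?_)
  exact summable_geometric_of_lt_one (by positivity) ((div_lt_one hs0).2 hs)

lemma summable_villatRemainderTerm {r : ℝ} (hr : r ∈ Ioo (0 : ℝ) 1) {z : ℂ}
    (hrz : r ^ 2 < ‖z‖) (hz : ‖z‖ < 1) : Summable fun k => villatRemainderTerm r k z :=
  Summable.of_norm_bounded (summable_villatRemainderTerm_bound hrz)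
    fun k => norm_villatRemainderTerm_le hr ((sq_nonneg r).trans_lt hrz) k le_rfl hz

lemma villatK_term_eq {r : ℝ} (hr : r ∈ Ioo (0 : ℝ) 1) (k : ℕ) (z : ℂ) :
    (z ^ (k + 1) - (r : ℂ) ^ (2 * (k + 1)) * z⁻¹ ^ (k + 1)) / (1 - (r : ℂ) ^ (2 * (k + 1))) =
      z ^ (k + 1) + villatRemainderTerm r k z := by
  have h := one_sub_ofReal_pow_ne_zero hr k
  rw [villatRemainderTerm, eq_comm, ← sub_eq_zero]
  generalize (r : ℂ) ^ (2 * (k + 1)) = a at h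
  field_simp
  ring

lemma summable_pow_succ {z : ℂ} (hz : ‖z‖ < 1) : Summable fun k : ℕ => z ^ (k + 1) :=
  (summable_nat_add_iff 1).2 (summable_geometric_of_norm_lt_one hz)

lemma summable_villatK_term {r : ℝ} (hr : r ∈ Ioo (0 : ℝ) 1) {z : ℂ}
    (hrz : r ^ 2 < ‖z‖) (hz : ‖z‖ < 1) : Summable fun k : ℕ =>
      (z ^ (k + 1) - (r : ℂ) ^ (2 * (k + 1)) * z⁻¹ ^ (k + 1)) / (1 - (r : ℂ) ^ (2 * (k + 1))) := by
  simp_rw [villatK_term_eq hr]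
  exact (summable_pow_succ hz).add (summable_villatRemainderTerm hr hrz hz)

lemma one_sub_ne_zero_of_norm_lt_one {z : ℂ} (hz : ‖z‖ < 1) : 1 - z ≠ 0 := by
  rintro h
  rw [← sub_eq_zero.1 h] at hz
  simp at hz

lemma villatK_eq_add_remainder {r : ℝ} (hr : r ∈ Ioo (0 : ℝ) 1) {z : ℂ}
    (hrz : r ^ 2 < ‖z‖) (hz : ‖z‖ < 1) :
    villatK r z = (1 + z) / (1 - z) + 2 * ∑' k, villatRemainderTerm r k z := by
  have h1 := one_sub_ne_zero_of_norm_lt_one hz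
  simp_rw [villatK, villatK_term_eq hr]
  rw [(summable_pow_succ hz).tsum_add (summable_villatRemainderTerm hr hrz hz),
    geom_series_succ z hz, tsum_geometric_of_norm_lt_one hz]
  field_simp
  ring

lemma differentiableAt_villatK {r : ℝ} (hr : r ∈ Ioo (0 : ℝ) 1) {z : ℂ}
    (hrz : r ^ 2 < ‖z‖) (hz : ‖z‖ < 1) : DifferentiableAt ℂ (villatK r) z := by
  obtain ⟨s, hrs, hsz⟩ := exists_between hrz
  have hs0 : 0 < s := (sq_nonneg r).trans_lt hrs
  set U : Set ℂ := {w | s < ‖w‖ ∧ ‖w‖ < 1}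
  have hU : IsOpen U :=
    (isOpen_lt continuous_const continuous_norm).inter (isOpen_lt continuous_norm continuous_const)
  have hmem : U ∈ nhds z := hU.mem_nhds ⟨hsz, hz⟩
  have hdiff : DifferentiableOn ℂ
      (fun w => (1 + w) / (1 - w) + 2 * ∑' k, villatRemainderTerm r k w) U := by
    refine DifferentiableOn.add ?_ (DifferentiableOn.const_mul ?_ _)
    · exact DifferentiableOn.div (by fun_prop) (by fun_prop)
        fun w hw => one_sub_ne_zero_of_norm_lt_one hw.2
    · refine differentiableOn_tsum_of_summable_norm (summable_villatRemainderTerm_bound hrs)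
        (fun k w hw => ?_) hU (fun k w hw => norm_villatRemainderTerm_le hr hs0 k hw.1.le hw.2)
      have hw0 : w ≠ 0 := norm_pos_iff.1 (hs0.trans hw.1)
      unfold villatRemainderTerm
      refine DifferentiableAt.differentiableWithinAt ?_
      exact ((((differentiableAt_id.pow _).sub ((differentiableAt_inv hw0).pow _)).const_mul
        _).div_const _)
  refine (hdiff.differentiableAt hmem).congr_of_eventuallyEq ?_
  filter_upwards [hmem] with w hw
  exact villatK_eq_add_remainder hr (hrs.trans hw.1) hw.2

lemma abs_re_villatRemainderTerm_le {r : ℝ} (hr : r ∈ Ioo (0 : ℝ) 1) (k : ℕ) {z : ℂ}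
    (hrz : r ≤ ‖z‖) (hz : ‖z‖ < 1) :
    |(villatRemainderTerm r k z).re| ≤
      (1 - ‖z‖) * (2 / (1 - r ^ 2) * ((k + 1 : ℕ) * r ^ (k + 1))) := by
  have hz0 : 0 < ‖z‖ := hr.1.trans_le hrz
  have hden : 0 < 1 - r ^ 2 := sub_pos.2 (sq_lt_one_of_mem_Ioo hr)
  have hre : (villatRemainderTerm r k z).re =
      r ^ (2 * (k + 1)) * (z ^ (k + 1) - (z ^ (k + 1))⁻¹).re / (1 - r ^ (2 * (k + 1))) := by
    have h : villatRemainderTerm r k z =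
        ((r ^ (2 * (k + 1)) / (1 - r ^ (2 * (k + 1))) : ℝ) : ℂ) *
          (z ^ (k + 1) - (z ^ (k + 1))⁻¹) := by
      rw [villatRemainderTerm, inv_pow]
      push_cast
      ring
    rw [h, Complex.re_ofReal_mul]
    ring
  have hnum : |(z ^ (k + 1) - (z ^ (k + 1))⁻¹).re| ≤
      ‖z‖⁻¹ ^ (k + 1) * (2 * (k + 1 : ℕ) * (1 - ‖z‖)) := by
    have hm : 0 < ‖z‖ ^ (k + 1) := pow_pos hz0 _
    have h1 : (z ^ (k + 1) - (z ^ (k + 1))⁻¹).re =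
        -((z ^ (k + 1)).re * ((1 - ‖z‖ ^ (2 * (k + 1))) / (‖z‖ ^ (k + 1)) ^ 2)) := by
      rw [Complex.sub_re, Complex.inv_re, Complex.normSq_eq_norm_sq, norm_pow]
      field_simp
      ring
    have h2 : 0 ≤ 1 - ‖z‖ ^ (2 * (k + 1)) :=
      sub_nonneg.2 (pow_le_one₀ hz0.le hz.le)
    have h3 := one_add_mul_sub_le_pow (a := ‖z‖) (by linarith) (2 * (k + 1))
    have h4 : |(z ^ (k + 1)).re| ≤ ‖z‖ ^ (k + 1) :=
      (Complex.abs_re_le_norm _).trans_eq (norm_pow _ _)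
    rw [h1, abs_neg, abs_mul, abs_of_nonneg (div_nonneg h2 (sq_nonneg (‖z‖ ^ (k + 1))))]
    calc |(z ^ (k + 1)).re| * ((1 - ‖z‖ ^ (2 * (k + 1))) / (‖z‖ ^ (k + 1)) ^ 2)
        ≤ ‖z‖ ^ (k + 1) * ((1 - ‖z‖ ^ (2 * (k + 1))) / (‖z‖ ^ (k + 1)) ^ 2) := by gcongr
      _ = ‖z‖⁻¹ ^ (k + 1) * (1 - ‖z‖ ^ (2 * (k + 1))) := by
        rw [inv_pow]
        field_simp
      _ ≤ _ := by
        gcongr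
        push_cast at h3 ⊢
        linarith
  have hpow : r ^ (2 * (k + 1)) * ‖z‖⁻¹ ^ (k + 1) ≤ r ^ (k + 1) := by
    rw [pow_mul, ← mul_pow]
    refine pow_le_pow_left₀ (by positivity) ?_ _
    rw [← div_eq_mul_inv, div_le_iff₀ hz0, sq]
    exact mul_le_mul_of_nonneg_left hrz hr.1.le
  have h1z : 0 ≤ 1 - ‖z‖ := by linarith
  have hr0 := hr.1
  rw [hre, abs_div, abs_mul, abs_of_pos (one_sub_pow_pos hr k), abs_of_pos (pow_pos hr.1 _)]
  calc r ^ (2 * (k + 1)) * |(z ^ (k + 1) - (z ^ (k + 1))⁻¹).re| / (1 - r ^ (2 * (k + 1)))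
      ≤ r ^ (2 * (k + 1)) * (‖z‖⁻¹ ^ (k + 1) * (2 * (k + 1 : ℕ) * (1 - ‖z‖))) / (1 - r ^ 2) := by
        gcongr r ^ (2 * (k + 1)) * ?_ / (1 - ?_)
        exact pow_two_mul_succ_le_sq hr k
    _ = (r ^ (2 * (k + 1)) * ‖z‖⁻¹ ^ (k + 1)) * (2 * (k + 1 : ℕ) * (1 - ‖z‖)) / (1 - r ^ 2) := by
        ring
    _ ≤ r ^ (k + 1) * (2 * (k + 1 : ℕ) * (1 - ‖z‖)) / (1 - r ^ 2) := by gcongr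
    _ = _ := by ring

/-- Near the outer circle, `Re K_r` is uniformly close to the Poisson kernel. -/
lemma exists_abs_re_villatK_sub_le {r : ℝ} (hr : r ∈ Ioo (0 : ℝ) 1) :
    ∃ M : ℝ, ∀ z : ℂ, r ≤ ‖z‖ → ‖z‖ < 1 →
      |(villatK r z).re - (1 - ‖z‖ ^ 2) / ‖1 - z‖ ^ 2| ≤ M * (1 - ‖z‖) := by
  have hsum : Summable fun k : ℕ => 2 / (1 - r ^ 2) * ((k + 1 : ℕ) * r ^ (k + 1)) := by
    refine Summable.mul_left _ ((summable_nat_add_iff (f := fun k : ℕ => (k : ℝ) * r ^ k) 1).2 ?_)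
    have h := summable_pow_mul_geometric_of_norm_lt_one (R := ℝ) 1 (r := r)
      (by rw [Real.norm_of_nonneg hr.1.le]; exact hr.2)
    simpa using h
  refine ⟨2 * ∑' k : ℕ, 2 / (1 - r ^ 2) * ((k + 1 : ℕ) * r ^ (k + 1)),
    fun z hrz hz => ?_⟩
  have hrz' : r ^ 2 < ‖z‖ := by nlinarith [hr.1, hr.2]
  have hmobius : ((1 + z) / (1 - z)).re = (1 - ‖z‖ ^ 2) / ‖1 - z‖ ^ 2 := by
    rw [Complex.div_re, ← Complex.normSq_eq_norm_sq, ← Complex.normSq_eq_norm_sq, ← add_div]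
    congr 1
    simp [Complex.normSq_apply]
    ring
  rw [villatK_eq_add_remainder hr hrz' hz, Complex.add_re, hmobius, add_sub_cancel_left,
    show ∀ w : ℂ, (2 * w).re = 2 * w.re by simp,
    Complex.re_tsum (summable_villatRemainderTerm hr hrz' hz), abs_mul, abs_two, mul_assoc]
  gcongr
  rw [mul_comm, ← tsum_mul_left]
  exact tsum_of_norm_bounded (f := fun k => (villatRemainderTerm r k z).re)
    (hsum.mul_left _).hasSum fun k => abs_re_villatRemainderTerm_le hr k hrz hz

lemma conj_villatK (r : ℝ) (z : ℂ) : conj (villatK r z) = villatK r (conj z) := by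
  simp [villatK, Complex.conj_tsum, map_ofNat]

lemma re_villatK_conj (r : ℝ) (z : ℂ) : (villatK r (conj z)).re = (villatK r z).re := by
  rw [← conj_villatK, Complex.conj_re]

/-- The functional equation of the Villat kernel under the reflection `z ↦ r² / z`. -/
lemma villatK_sq_div {r : ℝ} (hr : r ≠ 0) {z : ℂ} (hz : z ≠ 0) :
    villatK r ((r : ℂ) ^ 2 / z) = 2 - villatK r z := by
  have hr' : (r : ℂ) ≠ 0 := by exact_mod_cast hr
  have hterm : ∀ k : ℕ,
      (((r : ℂ) ^ 2 / z) ^ (k + 1) - (r : ℂ) ^ (2 * (k + 1)) * ((r : ℂ) ^ 2 / z)⁻¹ ^ (k + 1)) /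
        (1 - (r : ℂ) ^ (2 * (k + 1))) =
      -((z ^ (k + 1) - (r : ℂ) ^ (2 * (k + 1)) * z⁻¹ ^ (k + 1)) /
        (1 - (r : ℂ) ^ (2 * (k + 1)))) := fun k => by
    rw [← neg_div]
    congr 1
    rw [pow_mul, inv_div, div_pow, div_pow, inv_pow]
    field_simp
    ring
  simp_rw [villatK, hterm, tsum_neg]
  ring

lemma re_villatK_of_norm_eq {r : ℝ} (hr : 0 < r) {z : ℂ} (hz : ‖z‖ = r) :
    (villatK r z).re = 1 := by
  have hz0 : z ≠ 0 := norm_pos_iff.1 (hz ▸ hr)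
  have h : (r : ℂ) ^ 2 / z = conj z := by
    rw [div_eq_iff hz0, Complex.conj_mul', hz]
  have h2 := villatK_sq_div hr.ne' hz0
  have h3 := congrArg Complex.re h2
  rw [h, re_villatK_conj, Complex.sub_re, Complex.re_ofNat] at h3
  linarith

/-- A maximum principle on the part of an annulus where `p` is positive: the bound on the outer
circle is only required asymptotically, so that `G` may be singular there. -/
lemma norm_le_one_of_annulus_bound {r : ℝ} {G : ℂ → ℂ} {p : ℂ → ℝ} {c : ℝ → ℝ}
    (hp : Continuous p) (hG : ∀ z, r ≤ ‖z‖ → ‖z‖ < 1 → DifferentiableAt ℂ G z)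
    (hinner : ∀ z, ‖z‖ = r → 0 ≤ p z → ‖G z‖ ≤ 1)
    (hside : ∀ z, r ≤ ‖z‖ → ‖z‖ < 1 → p z = 0 → ‖G z‖ ≤ 1)
    (hc : ContinuousAt c 1) (hc1 : c 1 = 1)
    (houter : ∀ z, r ≤ ‖z‖ → ‖z‖ < 1 → 0 ≤ p z → ‖G z‖ ≤ c ‖z‖)
    {z : ℂ} (hrz : r ≤ ‖z‖) (hz : ‖z‖ < 1) (hpz : 0 ≤ p z) : ‖G z‖ ≤ 1 := by
  rcases hrz.eq_or_lt with h | hrz'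
  · exact hinner z h.symm hpz
  rcases hpz.eq_or_lt with h | hpz'
  · exact hside z hrz hz h.symm
  have hbound : ∀ s, ‖z‖ < s → s < 1 → ‖G z‖ ≤ max 1 (c s) := by
    intro s hzs hs
    set U : Set ℂ := {w | r < ‖w‖ ∧ ‖w‖ < s ∧ 0 < p w}
    have hUopen : IsOpen U := (isOpen_lt continuous_const continuous_norm).inter
      ((isOpen_lt continuous_norm continuous_const).inter (isOpen_lt continuous_const hp))
    have hcl : closure U ⊆ {w | r ≤ ‖w‖ ∧ ‖w‖ ≤ s ∧ 0 ≤ p w} :=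
      closure_minimal (fun w hw => ⟨hw.1.le, hw.2.1.le, hw.2.2.le⟩)
        ((isClosed_le continuous_const continuous_norm).inter
          ((isClosed_le continuous_norm continuous_const).inter (isClosed_le continuous_const hp)))
    have hUbdd : Bornology.IsBounded U :=
      Metric.isBounded_ball.subset fun w hw => mem_ball_zero_iff.2 hw.2.1
    refine Complex.norm_le_of_forall_mem_frontier_norm_le hUbdd
      (DifferentiableOn.diffContOnCl fun w hw => ?_) (fun w hw => ?_)
      (subset_closure ⟨hrz', hzs, hpz'⟩)
    · obtain ⟨h1, h2, -⟩ := hcl hw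
      exact (hG w h1 (h2.trans_lt hs)).differentiableWithinAt
    · rw [hUopen.frontier_eq] at hw
      obtain ⟨h1, h2, h3⟩ := hcl hw.1
      rcases h1.eq_or_lt with h | h1'
      · exact (hinner w h.symm h3).trans (le_max_left _ _)
      rcases h3.eq_or_lt with h | h3'
      · exact (hside w h1 (h2.trans_lt hs) h.symm).trans (le_max_left _ _)
      rcases h2.eq_or_lt with h | h2'
      · exact (h ▸ houter w h1 (h2.trans_lt hs) h3).trans (le_max_right _ _)
      · exact absurd ⟨h1', h2', h3'⟩ hw.2
  have hlim : Filter.Tendsto (fun s => max 1 (c s)) (nhdsWithin 1 (Iio 1)) (nhds 1) := by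
    have h := (tendsto_const_nhds (x := (1 : ℝ))).max (hc.tendsto.mono_left
      (nhdsWithin_le_nhds (s := Iio 1)))
    rwa [hc1, max_self] at h
  refine ge_of_tendsto hlim ?_
  filter_upwards [Ioo_mem_nhdsLT hz] with s hs
  exact hbound s hs.1 hs.2

/-- Reflecting in a line through the origin, away from the point `1`, decreases `Re K_r`. -/
lemma re_villatK_reflect_le {r : ℝ} (hr : r ∈ Ioo (0 : ℝ) 1) {n : ℂ} (hn : ‖n‖ = 1)
    (hn0 : 0 ≤ n.re) {z : ℂ} (hrz : r ≤ ‖z‖) (hz : ‖z‖ < 1) (hzn : 0 ≤ (z * conj n).re) :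
    (villatK r (-n ^ 2 * conj z)).re ≤ (villatK r z).re := by
  obtain ⟨M, hMK⟩ := exists_abs_re_villatK_sub_le hr
  have hnn : n * conj n = 1 := by
    rw [Complex.mul_conj, Complex.normSq_eq_norm_sq, hn]
    simp
  have hconj : ∀ w : ℂ, conj (-n ^ 2 * conj w) = -conj n ^ 2 * w := fun w => by simp
  have hre : ∀ w : ℂ, (villatK r (-conj n ^ 2 * w)).re = (villatK r (-n ^ 2 * conj w)).re :=
    fun w => by rw [← hconj, re_villatK_conj]
  have hnorm : ∀ w : ℂ, ‖-n ^ 2 * conj w‖ = ‖w‖ := fun w => by simp [hn]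
  have hnorm' : ∀ w : ℂ, ‖-conj n ^ 2 * w‖ = ‖w‖ := fun w => by simp [hn]
  have hsub : ∀ w : ℂ, w - -n ^ 2 * conj w = ((2 * (w * conj n).re : ℝ) : ℂ) * n := fun w => by
    have h := Complex.add_conj (w * conj n)
    rw [map_mul, Complex.conj_conj] at h
    rw [← h]
    linear_combination (-w) * hnn
  set F : ℂ → ℂ := fun w => villatK r w - villatK r (-conj n ^ 2 * w)
  have hFre : ∀ w, (F w).re = (villatK r w).re - (villatK r (-n ^ 2 * conj w)).re := fun w => by
    rw [← hre]
    rfl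
  have hGnorm : ∀ w, ‖Complex.exp (-F w)‖ = Real.exp (-(F w).re) := fun w => by
    rw [Complex.norm_exp, Complex.neg_re]
  have hsq : ∀ w : ℂ, r ≤ ‖w‖ → r ^ 2 < ‖w‖ := fun w hw => by nlinarith [hr.1, hr.2]
  have key : ‖Complex.exp (-F z)‖ ≤ 1 := by
    refine norm_le_one_of_annulus_bound (r := r) (G := fun w => Complex.exp (-F w))
      (p := fun w => (w * conj n).re) (c := fun s => Real.exp (2 * M * (1 - s)))
      (by fun_prop) ?_ ?_ ?_ (by fun_prop) (by simp) ?_ hrz hz hzn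
    · intro w hw hw1
      refine (DifferentiableAt.neg (DifferentiableAt.sub
        (differentiableAt_villatK hr (hsq w hw) hw1) ?_)).cexp
      refine DifferentiableAt.comp (g := villatK r) w (differentiableAt_villatK hr ?_ ?_)
        (by fun_prop)
      · rw [hnorm']; exact hsq w hw
      · rwa [hnorm']
    · intro w hw _
      rw [hGnorm, hFre, re_villatK_of_norm_eq hr.1 hw,
        re_villatK_of_norm_eq hr.1 ((hnorm w).trans hw)]
      simp
    · intro w _ _ hw
      have h := hsub w
      rw [hw, mul_zero, Complex.ofReal_zero, zero_mul, sub_eq_zero] at h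
      rw [hGnorm, hFre, ← h]
      simp
    · intro w hw hw1 hpw
      rw [hGnorm, hFre, Real.exp_le_exp]
      have h1 := hMK w hw hw1
      have h2 := hMK (-n ^ 2 * conj w) (by rwa [hnorm]) (by rwa [hnorm])
      rw [hnorm] at h2
      have hle : (1 - ‖w‖ ^ 2) / ‖1 - -n ^ 2 * conj w‖ ^ 2 ≤ (1 - ‖w‖ ^ 2) / ‖1 - w‖ ^ 2 := by
        have hw2 : 0 ≤ 1 - ‖w‖ ^ 2 := by nlinarith [norm_nonneg w]
        have hpos : 0 < ‖1 - w‖ := norm_pos_iff.2 (one_sub_ne_zero_of_norm_lt_one hw1)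
        have hre_le : (-n ^ 2 * conj w).re ≤ w.re := by
          have h := congrArg Complex.re (hsub w)
          rw [Complex.re_ofReal_mul, Complex.sub_re] at h
          have : 0 ≤ 2 * (w * conj n).re * n.re := by positivity
          linarith
        have hsqnorm : ∀ v : ℂ, ‖1 - v‖ ^ 2 = 1 - 2 * v.re + ‖v‖ ^ 2 := fun v => by
          rw [← Complex.normSq_eq_norm_sq, ← Complex.normSq_eq_norm_sq]
          simp [Complex.normSq_apply]
          ring
        refine div_le_div_of_nonneg_left hw2 (by positivity) ?_
        rw [hsqnorm, hsqnorm, hnorm]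
        linarith
      rw [abs_le] at h1 h2
      linarith [h1.1, h2.2]
  rw [hGnorm, Real.exp_le_one_iff, hFre] at key
  linarith

lemma re_villatK_pos {r : ℝ} (hr : r ∈ Ioo (0 : ℝ) 1) {z : ℂ} (hrz : r ≤ ‖z‖) (hz : ‖z‖ < 1) :
    0 < (villatK r z).re := by
  obtain ⟨M, hMK⟩ := exists_abs_re_villatK_sub_le hr
  have hz0 : 0 < ‖z‖ := hr.1.trans_le hrz
  set N : ℝ := -Real.log r
  have hN : 0 < N := neg_pos.2 (Real.log_neg hr.1 hr.2)
  have hGnorm : ∀ w : ℂ, ‖Complex.exp (-(N * villatK r w)) * w⁻¹‖ =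
      Real.exp (-(N * (villatK r w).re)) * ‖w‖⁻¹ := fun w => by
    rw [norm_mul, norm_inv, Complex.norm_exp, Complex.neg_re, Complex.re_ofReal_mul]
  have key : ‖Complex.exp (-(N * villatK r z)) * z⁻¹‖ ≤ 1 := by
    refine norm_le_one_of_annulus_bound (r := r)
      (G := fun w => Complex.exp (-(N * villatK r w)) * w⁻¹)
      (p := fun _ => 1) (c := fun s => Real.exp (N * (M * (1 - s))) * s⁻¹)
      continuous_const ?_ ?_ (by simp) ?_ (by simp) ?_ hrz hz zero_le_one
    · intro w hw hw1
      have hw0 : w ≠ 0 := norm_pos_iff.1 (hr.1.trans_le hw)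
      exact ((differentiableAt_villatK hr (by nlinarith [hr.1, hr.2]) hw1).const_mul
        _).neg.cexp.mul (differentiableAt_inv hw0)
    · intro w hw _
      rw [hGnorm, re_villatK_of_norm_eq hr.1 hw, hw, mul_one, neg_neg, Real.exp_log hr.1,
        mul_inv_cancel₀ hr.1.ne']
    · exact ContinuousAt.mul (by fun_prop) (continuousAt_inv₀ one_ne_zero)
    · intro w hw hw1 _
      rw [hGnorm]
      have h := (abs_le.1 (hMK w hw hw1)).1
      have hP : 0 ≤ (1 - ‖w‖ ^ 2) / ‖1 - w‖ ^ 2 :=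
        div_nonneg (by nlinarith [norm_nonneg w]) (sq_nonneg _)
      gcongr
      rw [← mul_neg]
      gcongr
      linarith
  rw [hGnorm, ← div_eq_mul_inv, div_le_one hz0] at key
  have h1 := Real.exp_lt_one_iff.1 (key.trans_lt hz)
  have h2 : 0 < N * (villatK r z).re := by linarith
  exact pos_of_mul_pos_right h2 hN.le

lemma one_add_sum_pow_mul {x : ℝ} (hx : x ≠ 0) (m : ℕ) :
    (1 + ∑ j ∈ Finset.range m, (x ^ (j + 1) + x⁻¹ ^ (j + 1))) * (x ^ m * (1 - x)) =
      1 - x ^ (2 * m + 1) := by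
  induction m with
  | zero => simp
  | succ m ih =>
    have h : (x⁻¹ ^ (m + 1)) * x ^ (m + 1) = 1 := by rw [← mul_pow, inv_mul_cancel₀ hx, one_pow]
    rw [Finset.sum_range_succ]
    linear_combination x * ih + (1 - x) * h

lemma add_inv_lt_add_inv {X Y : ℝ} (hY : 0 < Y) (hYX : Y < X) (hX : X < 1) :
    X + X⁻¹ < Y + Y⁻¹ := by
  have hX0 : 0 < X := hY.trans hYX
  have h : Y + Y⁻¹ - (X + X⁻¹) = (X - Y) * (1 - X * Y) / (X * Y) := by
    field_simp
    ring
  have : 0 < (X - Y) * (1 - X * Y) / (X * Y) :=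
    div_pos (mul_pos (by linarith) (by nlinarith)) (by positivity)
  linarith

lemma pow_mul_one_sub_mul_lt {x y : ℝ} (hy : 0 < y) (hyx : y < x) (hx : x < 1) {m : ℕ}
    (hm : m ≠ 0) :
    y ^ m * (1 - y) * (1 - x ^ (2 * m + 1)) < x ^ m * (1 - x) * (1 - y ^ (2 * m + 1)) := by
  have hx0 : 0 < x := hy.trans hyx
  have hsum : ∑ j ∈ Finset.range m, (x ^ (j + 1) + x⁻¹ ^ (j + 1)) <
      ∑ j ∈ Finset.range m, (y ^ (j + 1) + y⁻¹ ^ (j + 1)) := by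
    refine Finset.sum_lt_sum_of_nonempty (by simpa using hm) fun j _ => ?_
    rw [inv_pow, inv_pow]
    exact add_inv_lt_add_inv (by positivity) (pow_lt_pow_left₀ hyx hy.le (by omega))
      (pow_lt_one₀ hx0.le hx (by omega))
  have hpos : 0 < y ^ m * (1 - y) * (x ^ m * (1 - x)) :=
    mul_pos (mul_pos (by positivity) (by linarith)) (mul_pos (by positivity) (by linarith))
  rw [← one_add_sum_pow_mul hx0.ne', ← one_add_sum_pow_mul hy.ne']
  nlinarith [mul_lt_mul_of_pos_left hsum hpos]

/-- The general term of the series of `K_r(x)` at a real point `x`. -/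
noncomputable def villatCoeff (r x : ℝ) (k : ℕ) : ℝ :=
  (x ^ (k + 1) - r ^ (2 * (k + 1)) * x⁻¹ ^ (k + 1)) / (1 - r ^ (2 * (k + 1)))

lemma ofReal_villatCoeff (r x : ℝ) (k : ℕ) : (villatCoeff r x k : ℂ) =
    ((x : ℂ) ^ (k + 1) - (r : ℂ) ^ (2 * (k + 1)) * (x : ℂ)⁻¹ ^ (k + 1)) /
      (1 - (r : ℂ) ^ (2 * (k + 1))) := by
  simp [villatCoeff]

lemma summable_villatCoeff {r x : ℝ} (hr : r ∈ Ioo (0 : ℝ) 1) (hrx : r ≤ |x|) (hx : |x| < 1) :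
    Summable (villatCoeff r x) := by
  rw [← Complex.summable_ofReal]
  simp_rw [ofReal_villatCoeff]
  refine summable_villatK_term hr ?_ ?_ <;> rw [Complex.norm_real, Real.norm_eq_abs]
  · nlinarith [hr.1, hr.2]
  · exact hx

lemma re_villatK_ofReal (r x : ℝ) : (villatK r x).re = 1 + 2 * ∑' k, villatCoeff r x k := by
  have h : villatK r x = ((1 + 2 * ∑' k, villatCoeff r x k : ℝ) : ℂ) := by
    rw [villatK]
    push_cast
    simp_rw [ofReal_villatCoeff]
  rw [h, Complex.ofReal_re]

lemma strictMonoOn_villatCoeff {r : ℝ} (hr : r ∈ Ioo (0 : ℝ) 1) (k : ℕ) :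
    StrictMonoOn (fun x => villatCoeff r x k) (Ioi 0) := by
  intro x hx y hy hxy
  have hx' : 0 < x := hx
  have h1 : x ^ (k + 1) < y ^ (k + 1) := pow_lt_pow_left₀ hxy hx'.le (by omega)
  have h2 : r ^ (2 * (k + 1)) * y⁻¹ ^ (k + 1) ≤ r ^ (2 * (k + 1)) * x⁻¹ ^ (k + 1) := by
    have := hr.1
    have := hx'.trans hxy
    gcongr
  exact div_lt_div_of_pos_right (by linarith) (one_sub_pow_pos hr k)

lemma strictMonoOn_re_villatK {r : ℝ} (hr : r ∈ Ioo (0 : ℝ) 1) :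
    StrictMonoOn (fun x : ℝ => (villatK r (x : ℂ)).re) (Ico r 1) := by
  intro x hx y hy hxy
  have hx0 : 0 < x := hr.1.trans_le hx.1
  have hy0 : 0 < y := hx0.trans hxy
  have hsum : ∀ t ∈ Ico r 1, Summable (villatCoeff r t) := fun t ht => by
    have h := abs_of_pos (hr.1.trans_le ht.1)
    exact summable_villatCoeff hr (by rw [h]; exact ht.1) (by rw [h]; exact ht.2)
  have hlt := fun k => strictMonoOn_villatCoeff hr k hx0 hy0 hxy
  simp only [re_villatK_ofReal]
  linarith [(hsum x hx).tsum_lt_tsum (fun k => (hlt k).le) (hlt 0) (hsum y hy)]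

lemma villatK_self {r : ℝ} (hr : r ≠ 0) : villatK r (r : ℂ) = 1 := by
  have hr' : (r : ℂ) ≠ 0 := by exact_mod_cast hr
  have h := villatK_sq_div hr hr'
  rw [sq, mul_div_cancel_right₀ _ hr'] at h
  linear_combination h / 2

lemma villatCoeff_succ_lt {r x : ℝ} (hr : r ∈ Ioo (0 : ℝ) 1) (hx : x ∈ Ioo r 1) (k : ℕ) :
    villatCoeff r x (k + 1) < villatCoeff r x k := by
  have hx0 : 0 < x := hr.1.trans hx.1
  set y : ℝ := r ^ 2 / x with hy
  have hy0 : 0 < y := div_pos (pow_pos hr.1 2) hx0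
  have hyx : y < x := by
    rw [hy, div_lt_iff₀ hx0, ← sq]
    exact pow_lt_pow_left₀ hx.1 hr.1.le two_ne_zero
  have hxy : r ^ 2 = x * y := by
    rw [hy]
    field_simp
  have hcoeff : ∀ j, villatCoeff r x j =
      (x ^ (j + 1) - y ^ (j + 1)) / (1 - x ^ (j + 1) * y ^ (j + 1)) := fun j => by
    rw [villatCoeff, pow_mul, hxy, mul_pow, mul_right_comm, ← mul_pow, mul_inv_cancel₀ hx0.ne',
      one_pow, one_mul]
  have hpos : ∀ j, 0 < 1 - x ^ (j + 1) * y ^ (j + 1) := fun j => by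
    rw [← mul_pow, ← hxy, ← pow_mul]
    exact one_sub_pow_pos hr j
  rw [hcoeff, hcoeff, div_lt_div_iff₀ (hpos _) (hpos _)]
  have h := pow_mul_one_sub_mul_lt hy0 hyx hx.2 k.succ_ne_zero
  have hpow : ∀ t : ℝ, t ^ (2 * (k + 1) + 1) = t ^ (k + 1) * t ^ (k + 1) * t := fun t => by ring
  rw [Nat.succ_eq_add_one, hpow, hpow] at h
  rw [pow_succ x (k + 1), pow_succ y (k + 1)]
  linarith

lemma villatCoeff_neg (r x : ℝ) (k : ℕ) :
    villatCoeff r (-x) k = (-1) ^ (k + 1) * villatCoeff r x k := by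
  rw [villatCoeff, villatCoeff, inv_neg, neg_pow x, neg_pow x⁻¹]
  ring

lemma re_villatK_neg_lt_one {r x : ℝ} (hr : r ∈ Ioo (0 : ℝ) 1) (hx : x ∈ Ioo r 1) :
    (villatK r ((-x : ℝ) : ℂ)).re < 1 := by
  have habs : |(-x)| = x := by rw [abs_neg, abs_of_pos (hr.1.trans hx.1)]
  have hsum : Summable (villatCoeff r (-x)) :=
    summable_villatCoeff hr (by rw [habs]; exact hx.1.le) (by rw [habs]; exact hx.2)
  have heven : Summable fun j => villatCoeff r (-x) (2 * j) :=
    hsum.comp_injective fun a b h => by simpa using h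
  have hodd : Summable fun j => villatCoeff r (-x) (2 * j + 1) :=
    hsum.comp_injective fun a b h => by simpa using h
  have hpair : ∀ j, villatCoeff r (-x) (2 * j) + villatCoeff r (-x) (2 * j + 1) < 0 := fun j => by
    have h := villatCoeff_succ_lt hr hx (2 * j)
    rw [villatCoeff_neg, villatCoeff_neg]
    simp only [pow_succ, pow_mul]
    norm_num
    exact h
  have hneg : ∑' k, villatCoeff r (-x) k < 0 := by
    rw [← tsum_even_add_odd heven hodd, ← heven.tsum_add hodd]
    have h := (heven.add hodd).tsum_lt_tsum (fun j => (hpair j).le) (hpair 0) summable_zero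
    simpa using h
  rw [re_villatK_ofReal]
  linarith

lemma exists_sq_eq_re_nonneg {w : ℂ} (hw : ‖w‖ = 1) :
    ∃ n : ℂ, ‖n‖ = 1 ∧ 0 ≤ n.re ∧ n ^ 2 = w := by
  obtain ⟨n, hn⟩ := IsAlgClosed.exists_pow_nat_eq w zero_lt_two
  have hnorm : ‖n‖ = 1 := by
    rw [← pow_eq_one_iff_of_nonneg (norm_nonneg n) two_ne_zero, ← norm_pow, hn, hw]
  rcases le_total 0 n.re with h | h
  · exact ⟨n, hnorm, h, hn⟩
  · exact ⟨-n, by rwa [norm_neg], by rw [Complex.neg_re]; linarith, by rw [neg_sq, hn]⟩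

/-- On each circle `|z| = ρ` (with `r < ρ < 1`) the maximum of `Re K_r` is `K_r(ρ) > 1`,
its minimum is `K_r(−ρ) ∈ (0,1)`; moreover `x ↦ K_r(x)` is increasing on `[r,1)` and
`K_r(r) = 1`. -/
theorem villat_kernel_re_extrema
    (r : ℝ) (hr : r ∈ Ioo (0:ℝ) 1) (ρ : ℝ) (hρ : ρ ∈ Ioo r 1) :
    (∀ θ : ℝ,
        (villatK r (Complex.exp ((θ : ℂ) * Complex.I) * (ρ : ℂ))).re ≤
          (villatK r ((ρ : ℝ) : ℂ)).re) ∧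
    (∀ θ : ℝ,
        (villatK r (((-ρ : ℝ) : ℂ))).re ≤
          (villatK r (Complex.exp ((θ : ℂ) * Complex.I) * (ρ : ℂ))).re) ∧
    1 < (villatK r ((ρ : ℝ) : ℂ)).re ∧
    0 < (villatK r (((-ρ : ℝ) : ℂ))).re ∧
    (villatK r (((-ρ : ℝ) : ℂ))).re < 1 ∧
    StrictMonoOn (fun x : ℝ => (villatK r ((x : ℝ) : ℂ)).re) (Ico r 1) ∧
    villatK r ((r : ℝ) : ℂ) = 1 := by
  have hρ0 : 0 < ρ := hr.1.trans hρ.1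
  have hnorm_ofReal : ‖(ρ : ℂ)‖ = ρ := by
    rw [Complex.norm_real, Real.norm_of_nonneg hρ0.le]
  have hnorm : ∀ θ : ℝ, ‖Complex.exp ((θ : ℂ) * Complex.I) * (ρ : ℂ)‖ = ρ := fun θ => by
    rw [norm_mul, Complex.norm_exp_ofReal_mul_I, one_mul, hnorm_ofReal]
  have hmono := strictMonoOn_re_villatK hr
  have hself := villatK_self hr.1.ne'
  refine ⟨fun θ => ?_, fun θ => ?_, ?_, ?_, re_villatK_neg_lt_one hr hρ, hmono, hself⟩
  · obtain ⟨n, hn, hn0, hsq⟩ := exists_sq_eq_re_nonneg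
      (w := -Complex.exp ((θ : ℂ) * Complex.I)) (by rw [norm_neg, Complex.norm_exp_ofReal_mul_I])
    have h := re_villatK_reflect_le hr hn hn0 (z := ρ) (by rw [hnorm_ofReal]; exact hρ.1.le)
      (by rw [hnorm_ofReal]; exact hρ.2)
      (by rw [Complex.re_ofReal_mul, Complex.conj_re]; positivity)
    rwa [hsq, neg_neg, Complex.conj_ofReal] at h
  · obtain ⟨n, hn, hn0, hsq⟩ := exists_sq_eq_re_nonneg
      (w := Complex.exp ((θ : ℂ) * Complex.I)) (Complex.norm_exp_ofReal_mul_I θ)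
    have hnn : n * conj n = 1 := by
      rw [Complex.mul_conj, Complex.normSq_eq_norm_sq, hn]
      simp
    have hz : Complex.exp ((θ : ℂ) * Complex.I) * (ρ : ℂ) * conj n = ρ * n := by
      rw [← hsq]
      linear_combination (ρ * n) * hnn
    have h := re_villatK_reflect_le hr hn hn0 (z := Complex.exp ((θ : ℂ) * Complex.I) * (ρ : ℂ))
      (by rw [hnorm]; exact hρ.1.le) (by rw [hnorm]; exact hρ.2)
      (by rw [hz, Complex.re_ofReal_mul]; positivity)
    have hrefl : -n ^ 2 * conj (Complex.exp ((θ : ℂ) * Complex.I) * (ρ : ℂ)) = ((-ρ : ℝ) : ℂ) := by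
      rw [← hsq, map_mul, map_pow, Complex.conj_ofReal]
      push_cast
      linear_combination (-(ρ : ℂ) * (n * conj n + 1)) * hnn
    rwa [hrefl] at h
  · have h := hmono (left_mem_Ico.2 hr.2) ⟨hρ.1.le, hρ.2⟩ hρ.1
    simpa [hself] using h
  · refine re_villatK_pos hr ?_ ?_ <;> rw [Complex.ofReal_neg, norm_neg, hnorm_ofReal]
    exacts [hρ.1.le, hρ.2]
end
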